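/- For every function f : (0,∞) → (0,∞) with f(R) → ∞ as R → ∞, there exists a Morse gauge N (depending only on f) with the following property. Let Z be a metric space and let γ : I → Z be a geodesic (an isometric embedding of a real interval I). Suppose that for every R > 0, every continuous path β : [c,d] → Z whose endpoints β(c), β(d) lie at distance at most R from the image of γ and whose interior points β(t), for t ∈ (c,d), lie at distance at least R from the image of γ, satisfies ℓ(β) ≥ f(R)·d(β(c), β(d)) − f(R). Then γ is N-Morse. -/

import Mathlib

open Set Metric Filter Topology ENNReal

/-- The length (total variation) of a path `α` over the interval `[a, b]`. -/
noncomputable def pathLength {Z : Type*} [MetricSpace Z] (α : ℝ → Z) (a b : ℝ) : ℝ≥0∞ :=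
  eVariationOn α (Set.Icc a b)

/-- `α` is a `(K, C)`-quasi-geodesic path on `[a, b]`: it is continuous and for all
`a ≤ t ≤ u ≤ b`, the length of `α` over `[t, u]` is at most `K (u - t) + C` and
`d(α(t), α(u)) ≥ (u - t)/K - C`. -/
def IsQuasiGeodesicOn {Z : Type*} [MetricSpace Z] (K C : ℝ) (α : ℝ → Z) (a b : ℝ) : Prop :=
  ContinuousOn α (Set.Icc a b) ∧
  ∀ t u : ℝ, a ≤ t → t ≤ u → u ≤ b →
    pathLength α t u ≤ ENNReal.ofReal (K * (u - t) + C) ∧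
    (u - t) / K - C ≤ dist (α t) (α u)

/-- `γ` is a geodesic on the interval `I`: `I` is a real interval (order-connected set) and
`γ` is an isometric embedding of `I`. -/
def IsGeodesicOn {Z : Type*} [MetricSpace Z] (γ : ℝ → Z) (I : Set ℝ) : Prop :=
  I.OrdConnected ∧ ∀ t ∈ I, ∀ u ∈ I, dist (γ t) (γ u) = |t - u|

/-- The geodesic `γ : I → Z` is `N`-Morse: every `(K, C)`-quasi-geodesic path with endpoints
on the image of `γ` stays in the closed `N K C`-neighborhood of the image of `γ`. -/
def IsMorseGeodesic {Z : Type*} [MetricSpace Z] (N : ℝ → ℝ → ℝ) (γ : ℝ → Z) (I : Set ℝ) :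
    Prop :=
  ∀ K C : ℝ, 1 ≤ K → 0 ≤ C →
    ∀ (a b : ℝ) (α : ℝ → Z), a ≤ b → IsQuasiGeodesicOn K C α a b →
      α a ∈ γ '' I → α b ∈ γ '' I →
      ∀ t ∈ Set.Icc a b, Metric.infDist (α t) (γ '' I) ≤ N K C

/-- Every path whose endpoints are at distance at most `R` from the image of `γ` and whose
interior points are at distance at least `R` from the image of `γ` has length at least
`f(R) · d(endpoints) − f(R)`. -/
def DetourCondition {Z : Type*} [MetricSpace Z] (f : ℝ → ℝ) (γ : ℝ → Z) (I : Set ℝ) : Prop :=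
  ∀ R : ℝ, 0 < R →
    ∀ (c d : ℝ) (β : ℝ → Z), c ≤ d → ContinuousOn β (Set.Icc c d) →
      Metric.infDist (β c) (γ '' I) ≤ R → Metric.infDist (β d) (γ '' I) ≤ R →
      (∀ t ∈ Set.Ioo c d, R ≤ Metric.infDist (β t) (γ '' I)) →
      ENNReal.ofReal (f R * dist (β c) (β d) - f R) ≤ pathLength β c d

/-- If a continuous function is at most `R` at both ends of an interval, each time `t` lies in some
`[c, d]` with endpoint values at most `R` and interior values at least `R`. -/
theorem exists_excursion {h : ℝ → ℝ} {a b t R : ℝ} (hh : ContinuousOn h (Icc a b))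
    (ht : t ∈ Icc a b) (ha : h a ≤ R) (hb : h b ≤ R) :
    ∃ c d, a ≤ c ∧ d ≤ b ∧ t ∈ Icc c d ∧ h c ≤ R ∧ h d ≤ R ∧ ∀ s ∈ Ioo c d, R ≤ h s := by
  have compactLeft : IsCompact (Icc a t ∩ h ⁻¹' Iic R) :=
    isCompact_Icc.of_isClosed_subset
      ((hh.mono (Icc_subset_Icc_right ht.2)).preimage_isClosed_of_isClosed isClosed_Icc isClosed_Iic)
      inter_subset_left
  have compactRight : IsCompact (Icc t b ∩ h ⁻¹' Iic R) :=
    isCompact_Icc.of_isClosed_subset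
      ((hh.mono (Icc_subset_Icc_left ht.1)).preimage_isClosed_of_isClosed isClosed_Icc isClosed_Iic)
      inter_subset_left
  obtain ⟨c, ⟨⟨hac, hct⟩, hc⟩, hcmax⟩ :=
    compactLeft.exists_isGreatest ⟨a, ⟨le_rfl, ht.1⟩, ha⟩
  obtain ⟨d, ⟨⟨htd, hdb⟩, hd⟩, hdmin⟩ :=
    compactRight.exists_isLeast ⟨b, ⟨ht.2, le_rfl⟩, hb⟩
  refine ⟨c, d, hac, hdb, ⟨hct, htd⟩, hc, hd, fun s hs => ?_⟩
  by_contra! hlt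
  rcases le_total s t with hst | hts
  · exact hs.1.not_ge (hcmax ⟨⟨hac.trans hs.1.le, hst⟩, hlt.le⟩)
  · exact hs.2.not_ge (hdmin ⟨⟨hts, hs.2.le.trans hdb⟩, hlt.le⟩)

/-- If a distance `D` and a time `T` satisfy the quasi-geodesic lower bound, and the detour lower
bound `F * D - F` is at most the quasi-geodesic length bound, with `F ≥ 2 * K ^ 2`, then the length
bound is controlled by `K` and `C` alone. -/
theorem length_bound_of_detour {K C D T F : ℝ} (hK : 1 ≤ K) (hC : 0 ≤ C) (hF : 2 * K ^ 2 ≤ F)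
    (hD : T / K - C ≤ D) (hdet : F * D - F ≤ K * T + C) :
    K * T + C ≤ K ^ 2 * (2 + 3 * C) + C := by
  have hT : T ≤ K * (D + C) := by
    rw [← div_le_iff₀' (by linarith)]
    linarith
  have hKT : K * T ≤ K ^ 2 * (D + C) := by nlinarith
  have hK2 : 1 ≤ K ^ 2 := one_le_pow₀ hK
  have hD2 : D ≤ 2 + 2 * C := by
    by_contra! hlt
    nlinarith [mul_nonneg (sub_nonneg.2 hF) (by linarith : 0 ≤ D - 1),
      mul_pos (by linarith : 0 < K ^ 2) (sub_pos.2 hlt), mul_nonneg (sub_nonneg.2 hK2) hC]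
  nlinarith

/-- A quasi-geodesic path with endpoints on `γ` leaves the `R`-neighbourhood of `γ` by at most a
constant depending on `K` and `C`, provided `f R ≥ 2 * K ^ 2`. -/
theorem DetourCondition.infDist_le {Z : Type*} [MetricSpace Z] {f : ℝ → ℝ} {γ α : ℝ → Z}
    {I : Set ℝ} {K C R a b t : ℝ} (hdet : DetourCondition f γ I) (hK : 1 ≤ K) (hC : 0 ≤ C)
    (hR : 0 < R) (hf : 2 * K ^ 2 ≤ f R) (hα : IsQuasiGeodesicOn K C α a b)
    (ha : α a ∈ γ '' I) (hb : α b ∈ γ '' I) (ht : t ∈ Icc a b) :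
    infDist (α t) (γ '' I) ≤ R + (K ^ 2 * (2 + 3 * C) + C) := by
  have hcont : ContinuousOn (fun s => infDist (α s) (γ '' I)) (Icc a b) :=
    (continuous_infDist_pt _).comp_continuousOn hα.1
  obtain ⟨c, d, hac, hdb, htcd, hc, hd, hout⟩ := exists_excursion hcont ht
    (by simpa only [infDist_zero_of_mem ha] using hR.le)
    (by simpa only [infDist_zero_of_mem hb] using hR.le)
  have hcd : c ≤ d := htcd.1.trans htcd.2
  obtain ⟨hlen, hlow⟩ := hα.2 c d hac hcd hdb
  have hnonneg : 0 ≤ K * (d - c) + C :=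
    add_nonneg (mul_nonneg (by linarith) (sub_nonneg.2 hcd)) hC
  have hupper := (hdet R hR c d α hcd (hα.1.mono (Icc_subset_Icc hac hdb)) hc hd hout).trans hlen
  rw [ENNReal.ofReal_le_ofReal_iff hnonneg] at hupper
  have hdist : dist (α t) (α c) ≤ K * (d - c) + C := by
    rw [← ENNReal.ofReal_le_ofReal_iff hnonneg, ← edist_dist]
    exact (eVariationOn.edist_le α htcd (left_mem_Icc.2 hcd)).trans hlen
  calc infDist (α t) (γ '' I) ≤ infDist (α c) (γ '' I) + dist (α t) (α c) :=
        infDist_le_infDist_add_dist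
    _ ≤ R + (K ^ 2 * (2 + 3 * C) + C) :=
        add_le_add hc (hdist.trans (length_bound_of_detour hK hC hf hlow hupper))

theorem stmt9.{u} (f : ℝ → ℝ) (hfpos : ∀ R : ℝ, 0 < R → 0 < f R)
    (hfdiv : Tendsto f atTop atTop) :
    ∃ N : ℝ → ℝ → ℝ, (∀ K C : ℝ, 1 ≤ K → 0 ≤ C → 0 ≤ N K C) ∧
      ∀ (Z : Type u) [MetricSpace Z] (γ : ℝ → Z) (I : Set ℝ),
        IsGeodesicOn γ I → DetourCondition f γ I → IsMorseGeodesic N γ I := by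
  have hex : ∀ K : ℝ, ∃ R, 0 < R ∧ 2 * K ^ 2 ≤ f R := fun K =>
    ((eventually_gt_atTop 0).and (hfdiv.eventually_ge_atTop (2 * K ^ 2))).exists
  choose R hRpos hRf using hex
  refine ⟨fun K C => R K + (K ^ 2 * (2 + 3 * C) + C), fun K C _ hC => ?_, ?_⟩
  · have := hRpos K
    positivity
  · intro Z _ γ I _ hdet K C hK hC a b α _ hα ha hb t ht
    exact hdet.infDist_le hK hC (hRpos K) (hRf K) hα ha hb ht
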